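/- Let C₂ = ZMod 2 act on ℝ² = EuclideanSpace ℝ (Fin 2) by swapping the two coordinates (the real regular representation ρ of C₂), act on ℝ² × ℝ via this action on ℝ² and trivially on ℝ, and act on the one-point compactifications OnePoint ℝ² and OnePoint (ℝ² × ℝ) by the induced actions fixing ∞ (based at ∞). Then the space Map^{C₂}_*(OnePoint ℝ², OnePoint (ℝ² × ℝ)) of C₂-equivariant basepoint-preserving continuous maps is homotopy equivalent to Map_*(S¹, S²) × Map_*(S², S³), i.e. to Ω S² × Ω² S³. (This is the computation (Ω^ρ S^{ρ+1})^{C₂} ≃ Ω(S² × Ω S³) from the identification of X_{ρ,2}^{ΦC₂}.) -/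

import Mathlib

/-!
STATEMENT 4: With `C₂ = ZMod 2` acting on `ℝ²` by swapping the two coordinates
(the real regular representation `ρ`), the space of equivariant based maps
`Map^{C₂}_*(OnePoint ℝ², OnePoint (ℝ² × ℝ))` is homotopy equivalent to
`Ω S² × Ω² S³`.
-/

noncomputable section

/-- The action of `k : ZMod 2` on `ℝ² = EuclideanSpace ℝ (Fin 2)`: the nontrivial
element swaps the two coordinates. -/
def swapAct (k : ZMod 2) (v : EuclideanSpace ℝ (Fin 2)) : EuclideanSpace ℝ (Fin 2) :=
  if k = 0 then v
  else (WithLp.equiv 2 (Fin 2 → ℝ)).symm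
    (fun i => (WithLp.equiv 2 (Fin 2 → ℝ)) v (Equiv.swap (0 : Fin 2) 1 i))

/-- `Map_*(S^k, S^l)`: based maps between one-point compactifications of
Euclidean spaces, based at `∞`. -/
abbrev BasedSphereMaps (k l : ℕ) : Type :=
  {f : C(OnePoint (EuclideanSpace ℝ (Fin k)), OnePoint (EuclideanSpace ℝ (Fin l))) //
    f OnePoint.infty = OnePoint.infty}

/-- The map `OnePoint X ∧ OnePoint Y → OnePoint Z` induced by a homeomorphism `X × Y ≃ₜ Z`. -/
def onePointSmash {X Y Z : Type*} [TopologicalSpace X] [TopologicalSpace Y] [TopologicalSpace Z]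
    (h : X × Y ≃ₜ Z) (a : OnePoint X) (b : OnePoint Y) : OnePoint Z :=
  a.elim OnePoint.infty fun x => b.elim OnePoint.infty fun y => (h (x, y) : OnePoint Z)

section Smash

variable {X Y Z : Type*} [TopologicalSpace X] [TopologicalSpace Y] [TopologicalSpace Z]
  (h : X × Y ≃ₜ Z)

@[simp] lemma onePointSmash_coe_coe (x : X) (y : Y) :
    onePointSmash h (x : OnePoint X) (y : OnePoint Y) = (h (x, y) : OnePoint Z) := rfl

@[simp] lemma onePointSmash_infty_left (b : OnePoint Y) :
    onePointSmash h OnePoint.infty b = OnePoint.infty := rfl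

@[simp] lemma onePointSmash_infty_right (a : OnePoint X) :
    onePointSmash h a OnePoint.infty = OnePoint.infty := by
  induction a using OnePoint.rec <;> rfl

lemma onePointSmash_eq_infty_iff {a : OnePoint X} {b : OnePoint Y} :
    onePointSmash h a b = OnePoint.infty ↔ a = OnePoint.infty ∨ b = OnePoint.infty := by
  induction a using OnePoint.rec <;> induction b using OnePoint.rec <;> simp

lemma onePointSmash_eq_iff {a a' : OnePoint X} {b b' : OnePoint Y} :
    onePointSmash h a b = onePointSmash h a' b' ↔
      (a = a' ∧ b = b') ∨ ((a = OnePoint.infty ∨ b = OnePoint.infty) ∧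
        (a' = OnePoint.infty ∨ b' = OnePoint.infty)) := by
  induction a using OnePoint.rec <;> induction b using OnePoint.rec <;>
    induction a' using OnePoint.rec <;> induction b' using OnePoint.rec <;> simp

lemma onePointSmash_surjective :
    Function.Surjective fun p : OnePoint X × OnePoint Y => onePointSmash h p.1 p.2 := by
  intro z
  induction z using OnePoint.rec with
  | infty => exact ⟨(OnePoint.infty, OnePoint.infty), rfl⟩
  | coe z => exact ⟨((h.symm z).1, (h.symm z).2), by simp⟩

lemma continuous_onePointSmash [T2Space X] [T2Space Y] [LocallyCompactSpace X]
    [LocallyCompactSpace Y] :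
    Continuous fun p : OnePoint X × OnePoint Y => onePointSmash h p.1 p.2 := by
  let i : X × Y → OnePoint X × OnePoint Y := Prod.map (↑) (↑)
  have hi : Topology.IsOpenEmbedding i :=
    OnePoint.isOpenEmbedding_coe.prodMap OnePoint.isOpenEmbedding_coe
  have key : ∀ s : Set Z, (fun p : OnePoint X × OnePoint Y => onePointSmash h p.1 p.2) ⁻¹'
      ((↑) '' s : Set (OnePoint Z)) = i '' (h ⁻¹' s) := by
    intro s
    ext ⟨a, b⟩
    induction a using OnePoint.rec <;> induction b using OnePoint.rec <;> simp [i]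
  rw [continuous_def]
  intro U hU
  by_cases hinf : OnePoint.infty ∈ U
  · obtain ⟨hc, hk⟩ := (OnePoint.isOpen_iff_of_mem hinf).1 hU
    have hUc : U = ((↑) '' ((↑) ⁻¹' U : Set Z)ᶜ : Set (OnePoint Z))ᶜ := by
      rw [OnePoint.compl_image_coe, compl_compl, Set.image_preimage_eq_inter_range]
      ext z
      induction z using OnePoint.rec <;> simp [hinf]
    rw [hUc, Set.preimage_compl, key]
    exact ((h.isCompact_preimage.2 hk).image hi.continuous).isClosed.isOpen_compl
  · have hUc : U = (↑) '' ((↑) ⁻¹' U : Set Z) := by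
      rw [Set.image_preimage_eq_inter_range]
      ext z
      induction z using OnePoint.rec <;> simp [hinf]
    rw [hUc, key]
    exact hi.isOpenMap _ (((OnePoint.isOpen_iff_of_notMem hinf).1 hU).preimage h.continuous)

end Smash

lemma continuous_of_comp_surjective {Z X X' Y : Type*} [TopologicalSpace Z] [TopologicalSpace X]
    [TopologicalSpace X'] [TopologicalSpace Y] [CompactSpace X'] [T2Space X] {p : X' → X}
    (hp : Continuous p) (hs : Function.Surjective p) {φ : Z × X → Y}
    (h : Continuous fun w : Z × X' => φ (w.1, p w.2)) : Continuous φ := by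
  have hq : Topology.IsQuotientMap (Prod.map (id : Z → Z) p) :=
    (isProperMap_id.prodMap hp.isProperMap).isClosedMap.isQuotientMap
      (continuous_id.prodMap hp) (Function.surjective_id.prodMap hs)
  exact hq.continuous_iff.2 h

/-- Negation on `ℝ ∪ {∞}`. -/
def projNeg : OnePoint ℝ → OnePoint ℝ := OnePoint.map fun x => -x

/-- The absolute value on `ℝ ∪ {∞}`. -/
def projAbs : OnePoint ℝ → OnePoint ℝ := OnePoint.map fun x => |x|

/-- The map `ℝ ∪ {∞} → ℝ ∪ {∞}` given by `log |x|`, collapsing `0` and `∞` to `∞`. -/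
def projLog (t : OnePoint ℝ) : OnePoint ℝ :=
  t.elim OnePoint.infty fun x => if x = 0 then OnePoint.infty else (Real.log x : OnePoint ℝ)

lemma continuous_projNeg : Continuous projNeg :=
  OnePoint.continuous_map continuous_neg (by
    simpa [Filter.coclosedCompact_eq_cocompact] using
      (Homeomorph.neg ℝ).isClosedEmbedding.tendsto_cocompact)

lemma continuous_projAbs : Continuous projAbs :=
  OnePoint.continuous_map continuous_abs (by
    rw [Filter.coclosedCompact_eq_cocompact]
    exact (tendsto_norm_cocompact_atTop (E := ℝ)).mono_right atTop_le_cocompact)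

@[simp] lemma projNeg_coe (x : ℝ) : projNeg x = ((-x : ℝ) : OnePoint ℝ) := rfl
@[simp] lemma projNeg_infty : projNeg OnePoint.infty = OnePoint.infty := rfl
@[simp] lemma projAbs_coe (x : ℝ) : projAbs x = ((|x| : ℝ) : OnePoint ℝ) := rfl
@[simp] lemma projAbs_infty : projAbs OnePoint.infty = OnePoint.infty := rfl

@[simp] lemma projLog_infty : projLog OnePoint.infty = OnePoint.infty := rfl

lemma projLog_coe (x : ℝ) :
    projLog x = if x = 0 then OnePoint.infty else (Real.log x : OnePoint ℝ) := rfl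

lemma projLog_eq_infty_iff {t : OnePoint ℝ} :
    projLog t = OnePoint.infty ↔ t = OnePoint.infty ∨ t = ((0 : ℝ) : OnePoint ℝ) := by
  induction t using OnePoint.rec with
  | infty => simp
  | coe x => by_cases hx : x = 0 <;> simp [projLog_coe, hx]

@[simp] lemma projAbs_projNeg (t : OnePoint ℝ) : projAbs (projNeg t) = projAbs t := by
  induction t using OnePoint.rec <;> simp

@[simp] lemma projAbs_projAbs (t : OnePoint ℝ) : projAbs (projAbs t) = projAbs t := by
  induction t using OnePoint.rec <;> simp

@[simp] lemma projLog_projAbs (t : OnePoint ℝ) : projLog (projAbs t) = projLog t := by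
  induction t using OnePoint.rec <;> simp [projLog_coe]

@[simp] lemma projLog_projNeg (t : OnePoint ℝ) : projLog (projNeg t) = projLog t := by
  rw [← projLog_projAbs, projAbs_projNeg, projLog_projAbs]

lemma projAbs_eq_of_projLog_eq {t t' : OnePoint ℝ} (h : projLog t = projLog t')
    (ht : projLog t ≠ OnePoint.infty) : projAbs t = projAbs t' := by
  have ht' := h ▸ ht
  rw [Ne, projLog_eq_infty_iff] at ht ht'
  induction t using OnePoint.rec with
  | infty => simp at ht
  | coe x =>
    induction t' using OnePoint.rec with
    | infty => simp at ht'
    | coe y =>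
      have hx : x ≠ 0 := by simpa using ht
      have hy : y ≠ 0 := by simpa using ht'
      simp only [projLog_coe, hx, hy, if_false, OnePoint.coe_eq_coe] at h
      rw [← Real.log_abs, ← Real.log_abs y] at h
      simpa using Real.log_injOn_pos (abs_pos.2 hx) (abs_pos.2 hy) h

lemma projLog_surjective : Function.Surjective projLog := by
  intro t
  induction t using OnePoint.rec with
  | infty => exact ⟨OnePoint.infty, rfl⟩
  | coe x => exact ⟨(Real.exp x : ℝ), by simp [projLog_coe]⟩

lemma continuous_projLog : Continuous projLog := by
  have hco {l : Filter ℝ} {g : ℝ → ℝ} (hg : Filter.Tendsto g l (Filter.cocompact ℝ)) :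
      Filter.Tendsto (fun x => (g x : OnePoint ℝ)) l (nhds OnePoint.infty) := by
    rw [← Filter.coclosedCompact_eq_cocompact] at hg
    exact OnePoint.tendsto_coe_infty.comp hg
  have heq {l : Filter ℝ} (hl : ∀ᶠ x in l, x ≠ 0) :
      (fun x : ℝ => projLog x) =ᶠ[l] fun x => (Real.log x : OnePoint ℝ) := by
    filter_upwards [hl] with x hx
    simp [projLog_coe, hx]
  rw [OnePoint.continuous_iff]
  constructor
  · rw [Filter.coclosedCompact_eq_cocompact]
    have h0 : ∀ᶠ x : ℝ in Filter.cocompact ℝ, x ≠ 0 := by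
      have := (isCompact_singleton (x := (0 : ℝ))).compl_mem_cocompact
      filter_upwards [this] with x hx using hx
    refine Filter.Tendsto.congr' (heq h0).symm (hco ?_)
    have := Real.tendsto_log_atTop.comp (tendsto_norm_cocompact_atTop (E := ℝ))
    refine Filter.Tendsto.mono_right ?_ atTop_le_cocompact
    simpa [Function.comp_def] using this
  · rw [continuous_iff_continuousAt]
    intro x
    by_cases hx : x = 0
    · subst hx
      rw [continuousAt_iff_punctured_nhds]
      have h0 : projLog ((0 : ℝ) : OnePoint ℝ) = OnePoint.infty := by simp [projLog_coe]
      rw [h0]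
      exact Filter.Tendsto.congr' (heq self_mem_nhdsWithin).symm
        (hco (Real.tendsto_log_nhdsNE_zero.mono_right atBot_le_cocompact))
    · have : ContinuousAt (fun x => (Real.log x : OnePoint ℝ)) x :=
        OnePoint.continuous_coe.continuousAt.comp (Real.continuousAt_log hx)
      exact this.congr (heq (isOpen_ne.mem_nhds hx)).symm

/-- Sum and difference coordinates on the plane. -/
def planeCoords : ℝ × ℝ ≃ₜ EuclideanSpace ℝ (Fin 2) where
  toFun p := !₂[p.1 + p.2, p.1 - p.2]
  invFun v := ((v 0 + v 1) / 2, (v 0 - v 1) / 2)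
  left_inv p := by ext <;> simp
  right_inv v := by ext i; fin_cases i <;> simp <;> ring
  continuous_toFun := by
    refine (PiLp.continuous_toLp 2 _).comp (continuous_pi fun i => ?_)
    fin_cases i <;> simp <;> fun_prop
  continuous_invFun := by fun_prop

/-- The splitting of `ℝ² × ℝ` into the fixed plane of the swap and the antidiagonal. -/
def spaceCoords : EuclideanSpace ℝ (Fin 2) × ℝ ≃ₜ EuclideanSpace ℝ (Fin 2) × ℝ where
  toFun p := (planeCoords (p.1 0, p.2), p.1 1)
  invFun p := (!₂[(planeCoords.symm p.1).1, p.2], (planeCoords.symm p.1).2)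
  left_inv p := by
    ext i
    · fin_cases i <;> simp
    · simp
  right_inv p := by simp
  continuous_toFun := by fun_prop
  continuous_invFun := by
    refine Continuous.prodMk ((PiLp.continuous_toLp 2 _).comp (continuous_pi fun i => ?_)) ?_
    · fin_cases i <;> simp <;> fun_prop
    · fun_prop

lemma swapAct_zero : swapAct 0 = id := by
  ext v; simp [swapAct]

lemma swapAct_one_planeCoords (c t : ℝ) :
    swapAct 1 (planeCoords (c, t)) = planeCoords (c, -t) := by
  ext i
  fin_cases i <;> simp [swapAct, planeCoords, sub_eq_add_neg]

/-- The sphere `S^{ρ+1}`. -/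
abbrev RepSphere : Type := OnePoint (EuclideanSpace ℝ (Fin 2) × ℝ)

/-- The reflection of `S^{ρ+1}` given by the nontrivial element of `C₂`. -/
def sphereSwap : RepSphere → RepSphere :=
  OnePoint.map fun p => (swapAct 1 p.1, p.2)

@[simp] lemma sphereSwap_infty : sphereSwap OnePoint.infty = OnePoint.infty := rfl

lemma sphereSwap_smash (y : OnePoint (EuclideanSpace ℝ (Fin 2))) (t : OnePoint ℝ) :
    sphereSwap (onePointSmash spaceCoords y t) = onePointSmash spaceCoords y (projNeg t) := by
  induction y using OnePoint.rec with
  | infty => rfl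
  | coe y =>
    induction t using OnePoint.rec with
    | infty => rfl
    | coe t => simp [sphereSwap, spaceCoords, swapAct_one_planeCoords]

lemma map_swapAct_one_smash (c t : OnePoint ℝ) :
    OnePoint.map (swapAct 1) (onePointSmash planeCoords c t) =
      onePointSmash planeCoords c (projNeg t) := by
  induction c using OnePoint.rec with
  | infty => rfl
  | coe c =>
    induction t using OnePoint.rec with
    | infty => rfl
    | coe t => simp [swapAct_one_planeCoords]

lemma sphereSwap_sphereSwap (z : RepSphere) : sphereSwap (sphereSwap z) = z := by
  obtain ⟨⟨y, t⟩, rfl⟩ := onePointSmash_surjective spaceCoords z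
  simp only [sphereSwap_smash]
  induction t using OnePoint.rec <;> simp

lemma continuous_sphereSwap : Continuous sphereSwap := by
  have hJ := continuous_onePointSmash spaceCoords
  refine (hJ.isClosedMap.isQuotientMap hJ (onePointSmash_surjective _)).continuous_iff.2 ?_
  simp only [Function.comp_def, sphereSwap_smash]
  exact hJ.comp (continuous_fst.prodMk (continuous_projNeg.comp continuous_snd))

lemma equivariant_iff (f : OnePoint (EuclideanSpace ℝ (Fin 2)) → RepSphere) :
    (∀ (k : ZMod 2) (x : OnePoint (EuclideanSpace ℝ (Fin 2))),
      f (OnePoint.map (swapAct k) x) = OnePoint.map (fun p => (swapAct k p.1, p.2)) (f x)) ↔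
    ∀ c t, f (onePointSmash planeCoords c (projNeg t)) =
      sphereSwap (f (onePointSmash planeCoords c t)) := by
  constructor
  · intro h c t
    rw [← map_swapAct_one_smash]
    exact h 1 _
  · intro h k x
    fin_cases k
    · have h0 : (fun p : EuclideanSpace ℝ (Fin 2) × ℝ => (swapAct 0 p.1, p.2)) = id := by
        rw [swapAct_zero]
        rfl
      change f (OnePoint.map (swapAct 0) x) =
        OnePoint.map (fun p : EuclideanSpace ℝ (Fin 2) × ℝ => (swapAct 0 p.1, p.2)) (f x)
      rw [h0, swapAct_zero]
      simp
    · obtain ⟨⟨c, t⟩, rfl⟩ := onePointSmash_surjective planeCoords x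
      exact (congrArg f (map_swapAct_one_smash c t)).trans (h c t)

/-- The equivariant based maps `S^ρ → S^{ρ+1}`. -/
abbrev EquivariantSphereMaps : Type :=
  {f : C(OnePoint (EuclideanSpace ℝ (Fin 2)), RepSphere) //
    f OnePoint.infty = OnePoint.infty ∧
    ∀ (k : ZMod 2) (x : OnePoint (EuclideanSpace ℝ (Fin 2))),
      f (OnePoint.map (swapAct k) x) = OnePoint.map (fun p => (swapAct k p.1, p.2)) (f x)}

lemma EquivariantSphereMaps.apply_projNeg (f : EquivariantSphereMaps) (c t : OnePoint ℝ) :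
    f.1 (onePointSmash planeCoords c (projNeg t)) =
      sphereSwap (f.1 (onePointSmash planeCoords c t)) :=
  (equivariant_iff f.1).1 f.2.2 c t

/-- The inclusion of the fixed sphere `S² ⊆ S^{ρ+1}`. -/
def fixedIncl (y : OnePoint (EuclideanSpace ℝ (Fin 2))) : RepSphere :=
  onePointSmash spaceCoords y ((0 : ℝ) : OnePoint ℝ)

lemma fixedIncl_injective : Function.Injective fixedIncl := by
  intro y y' h
  rcases (onePointSmash_eq_iff spaceCoords).1 h with h | ⟨h, h'⟩
  · exact h.1
  · simp only [OnePoint.coe_ne_infty, or_false] at h h'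
    rw [h, h']

lemma isEmbedding_fixedIncl : Topology.IsEmbedding fixedIncl := by
  have : Continuous fixedIncl :=
    (continuous_onePointSmash spaceCoords).comp (continuous_id.prodMk continuous_const)
  exact (this.isClosedEmbedding fixedIncl_injective).isEmbedding

lemma exists_fixedIncl_eq {z : RepSphere} (h : sphereSwap z = z) : ∃ y, fixedIncl y = z := by
  obtain ⟨⟨y, t⟩, rfl⟩ := onePointSmash_surjective spaceCoords z
  simp only [sphereSwap_smash] at h ⊢
  rcases (onePointSmash_eq_iff spaceCoords).1 h with h | ⟨-, h⟩
  · induction t using OnePoint.rec with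
    | infty => exact ⟨OnePoint.infty, by simp [fixedIncl]⟩
    | coe t =>
      have ht : t = 0 := by
        have := h.2
        simp only [projNeg_coe, OnePoint.coe_eq_coe] at this
        linarith
      exact ⟨y, by rw [ht]; rfl⟩
  · exact ⟨OnePoint.infty, ((onePointSmash_eq_infty_iff spaceCoords).2 h).symm⟩

lemma sphereSwap_fixedIncl (y : OnePoint (EuclideanSpace ℝ (Fin 2))) :
    sphereSwap (fixedIncl y) = fixedIncl y := by
  simp [fixedIncl, sphereSwap_smash]

/-- Apply `sphereSwap` over the negative half-line. -/
def signSwap (t : OnePoint ℝ) (z : RepSphere) : RepSphere :=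
  open Classical in if projAbs t = t then z else sphereSwap z

lemma signSwap_of_fixed {z : RepSphere} (h : sphereSwap z = z) (t : OnePoint ℝ) :
    signSwap t z = z := by
  unfold signSwap
  split_ifs <;> simp [h]

lemma projAbs_eq_or (t : OnePoint ℝ) : projAbs t = t ∨ projAbs t = projNeg t := by
  induction t using OnePoint.rec with
  | infty => simp
  | coe t => simpa using abs_choice t

lemma eq_projNeg_iff {t : OnePoint ℝ} :
    t = projNeg t ↔ t = OnePoint.infty ∨ t = ((0 : ℝ) : OnePoint ℝ) := by
  induction t using OnePoint.rec with
  | infty => simp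
  | coe t => simp [self_eq_neg]

lemma signSwap_apply_projAbs (f : EquivariantSphereMaps) (c t : OnePoint ℝ) :
    signSwap t (f.1 (onePointSmash planeCoords c (projAbs t))) =
      f.1 (onePointSmash planeCoords c t) := by
  unfold signSwap
  split_ifs with h
  · rw [h]
  · rw [(projAbs_eq_or t).resolve_left h, f.apply_projNeg, sphereSwap_sphereSwap]

lemma signSwap_projNeg {t : OnePoint ℝ} {z : RepSphere}
    (h : t = OnePoint.infty ∨ t = ((0 : ℝ) : OnePoint ℝ) → sphereSwap z = z) :
    signSwap (projNeg t) z = sphereSwap (signSwap t z) := by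
  by_cases ht : t = projNeg t
  · rw [← ht, signSwap_of_fixed (h (eq_projNeg_iff.1 ht)), h (eq_projNeg_iff.1 ht)]
  · unfold signSwap
    rw [projAbs_projNeg]
    rcases projAbs_eq_or t with h' | h'
    · rw [h', if_pos rfl, if_neg ht]
    · rw [h', if_pos rfl, if_neg (Ne.symm ht), sphereSwap_sphereSwap]

lemma continuous_signSwap {W : Type*} [TopologicalSpace W] {t : W → OnePoint ℝ} {z : W → RepSphere}
    (ht : Continuous t) (hz : Continuous z)
    (h : ∀ w, t w = OnePoint.infty ∨ t w = ((0 : ℝ) : OnePoint ℝ) → sphereSwap (z w) = z w) :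
    Continuous fun w => signSwap (t w) (z w) := by
  have hpos : IsClosed {w | projAbs (t w) = t w} :=
    isClosed_eq (continuous_projAbs.comp ht) ht
  have hneg : IsClosed {w | projAbs (t w) = projNeg (t w)} :=
    isClosed_eq (continuous_projAbs.comp ht) (continuous_projNeg.comp ht)
  have hcover : {w | projAbs (t w) = t w} ∪ {w | projAbs (t w) = projNeg (t w)} = Set.univ :=
    Set.eq_univ_of_forall fun w => projAbs_eq_or (t w)
  rw [← continuousOn_univ, ← hcover]
  refine ContinuousOn.union_of_isClosed ?_ ?_ hpos hneg
  · refine hz.continuousOn.congr fun w hw => ?_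
    exact if_pos hw
  · refine (continuous_sphereSwap.comp hz).continuousOn.congr fun w hw => ?_
    rw [Set.mem_ofPred_eq] at hw
    by_cases hfix : projAbs (t w) = t w
    · have := h w (eq_projNeg_iff.1 (hfix.symm.trans hw))
      simp [signSwap_of_fixed this, this]
    · exact if_neg hfix

/-- The collapse `S¹ ∧ (ℝ ∪ {∞}) → S²` onto the quotient of a half plane by its boundary, in the
coordinates `planeCoords`. -/
def halfCollapse (p : OnePoint ℝ × OnePoint ℝ) : OnePoint (EuclideanSpace ℝ (Fin 2)) :=
  onePointSmash planeCoords p.1 (projLog p.2)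

lemma continuous_halfCollapse : Continuous halfCollapse :=
  (continuous_onePointSmash planeCoords).comp
    (continuous_fst.prodMk (continuous_projLog.comp continuous_snd))

lemma halfCollapse_surjective : Function.Surjective halfCollapse :=
  (onePointSmash_surjective planeCoords).comp
    (Function.surjective_id.prodMap projLog_surjective)

lemma halfCollapse_eq_infty_iff {c t : OnePoint ℝ} :
    halfCollapse (c, t) = OnePoint.infty ↔
      c = OnePoint.infty ∨ t = OnePoint.infty ∨ t = ((0 : ℝ) : OnePoint ℝ) := by
  rw [halfCollapse, onePointSmash_eq_infty_iff, projLog_eq_infty_iff]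

section Group

variable {G : Type*} [Group G] [TopologicalSpace G] [IsTopologicalGroup G]
  (δ : OnePoint (EuclideanSpace ℝ (Fin 1)) ≃ₜ OnePoint ℝ) (hδ : δ OnePoint.infty = OnePoint.infty)
  (e : RepSphere ≃ₜ G)
  (ε : OnePoint (EuclideanSpace ℝ (Fin 3)) ≃ₜ G) (hε : ε OnePoint.infty = 1)

/-- The restriction of an equivariant map to the fixed circle. -/
def fixedLoop (f : EquivariantSphereMaps) (c : OnePoint ℝ) :
    OnePoint (EuclideanSpace ℝ (Fin 2)) :=
  Function.invFun fixedIncl (f.1 (onePointSmash planeCoords c ((0 : ℝ) : OnePoint ℝ)))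

lemma fixedIncl_fixedLoop (f : EquivariantSphereMaps) (c : OnePoint ℝ) :
    fixedIncl (fixedLoop f c) = f.1 (onePointSmash planeCoords c ((0 : ℝ) : OnePoint ℝ)) := by
  refine Function.invFun_eq (exists_fixedIncl_eq ?_)
  rw [← f.apply_projNeg]
  simp

lemma fixedLoop_infty (f : EquivariantSphereMaps) :
    fixedLoop f OnePoint.infty = OnePoint.infty := by
  apply fixedIncl_injective
  rw [fixedIncl_fixedLoop, onePointSmash_infty_left, f.2.1]
  rfl

lemma continuous_fixedLoop :
    Continuous fun p : EquivariantSphereMaps × OnePoint ℝ => fixedLoop p.1 p.2 := by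
  rw [isEmbedding_fixedIncl.continuous_iff]
  simp only [Function.comp_def, fixedIncl_fixedLoop]
  have := continuous_onePointSmash planeCoords
  exact (continuous_subtype_val.comp continuous_fst).eval
    (this.comp (continuous_snd.prodMk continuous_const))

/-- The quotient, over the closed half plane, of an equivariant map by the nullhomotopy of its
restriction to the boundary. -/
def discDifference (f : EquivariantSphereMaps) (p : OnePoint ℝ × OnePoint ℝ) : G :=
  e (f.1 (onePointSmash planeCoords p.1 (projAbs p.2))) *
    (e (onePointSmash spaceCoords (fixedLoop f p.1) (projAbs p.2)))⁻¹

lemma continuous_discDifference :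
    Continuous fun w : EquivariantSphereMaps × (OnePoint ℝ × OnePoint ℝ) =>
      discDifference e w.1 w.2 := by
  have hκ := continuous_onePointSmash planeCoords
  have hJ := continuous_onePointSmash spaceCoords
  have hc : Continuous fun w : EquivariantSphereMaps × (OnePoint ℝ × OnePoint ℝ) => w.2.1 := by
    fun_prop
  have ht : Continuous fun w : EquivariantSphereMaps × (OnePoint ℝ × OnePoint ℝ) =>
      projAbs w.2.2 := continuous_projAbs.comp (by fun_prop)
  refine (e.continuous.comp ?_).mul (e.continuous.comp ?_).inv
  · exact (continuous_subtype_val.comp continuous_fst).eval (hκ.comp (hc.prodMk ht))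
  · exact hJ.comp ((continuous_fixedLoop.comp (continuous_fst.prodMk hc)).prodMk ht)

omit [IsTopologicalGroup G] in
lemma discDifference_eq_one (f : EquivariantSphereMaps) {p : OnePoint ℝ × OnePoint ℝ}
    (h : halfCollapse p = OnePoint.infty) : discDifference e f p = 1 := by
  obtain ⟨c, t⟩ := p
  rw [discDifference, mul_inv_eq_one]
  rcases halfCollapse_eq_infty_iff.1 h with rfl | rfl | rfl
  · simp [f.2.1, fixedLoop_infty]
  · simp [f.2.1]
  · simpa [fixedIncl] using congrArg e (fixedIncl_fixedLoop f c).symm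

omit [IsTopologicalGroup G] in
lemma discDifference_congr (f : EquivariantSphereMaps) {p p' : OnePoint ℝ × OnePoint ℝ}
    (h : halfCollapse p = halfCollapse p') : discDifference e f p = discDifference e f p' := by
  by_cases hp : halfCollapse p = OnePoint.infty
  · rw [discDifference_eq_one e f hp, discDifference_eq_one e f (h ▸ hp)]
  · rcases (onePointSmash_eq_iff planeCoords).1 h with ⟨hc, ht⟩ | ⟨hwedge, -⟩
    · have hne : projLog p.2 ≠ OnePoint.infty := fun hwedge =>
        hp ((onePointSmash_eq_infty_iff planeCoords).2 (Or.inr hwedge))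
      rw [discDifference, discDifference, hc, projAbs_eq_of_projLog_eq ht hne]
    · exact absurd ((onePointSmash_eq_infty_iff planeCoords).2 hwedge) hp

/-- The element of `Ω² S³` determined by `discDifference`. -/
def differenceSphere (f : EquivariantSphereMaps) (w : OnePoint (EuclideanSpace ℝ (Fin 2))) :
    OnePoint (EuclideanSpace ℝ (Fin 3)) :=
  ε.symm (discDifference e f (Function.surjInv halfCollapse_surjective w))

omit [IsTopologicalGroup G] in
lemma differenceSphere_halfCollapse (f : EquivariantSphereMaps) (p : OnePoint ℝ × OnePoint ℝ) :
    differenceSphere e ε f (halfCollapse p) = ε.symm (discDifference e f p) :=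
  congrArg ε.symm (discDifference_congr e f (Function.surjInv_eq halfCollapse_surjective _))

lemma continuous_differenceSphere :
    Continuous fun p : EquivariantSphereMaps × OnePoint (EuclideanSpace ℝ (Fin 2)) =>
      differenceSphere e ε p.1 p.2 := by
  apply continuous_of_comp_surjective continuous_halfCollapse halfCollapse_surjective
  simp only [differenceSphere_halfCollapse]
  exact ε.symm.continuous.comp (continuous_discDifference e)

/-- Restriction to the fixed circle, together with the difference element. -/
def toLoopProduct (f : EquivariantSphereMaps) : BasedSphereMaps 1 2 × BasedSphereMaps 2 3 :=
  (⟨⟨fun c => fixedLoop f (δ c),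
      continuous_fixedLoop.comp (continuous_const.prodMk δ.continuous)⟩, by
      simp [hδ, fixedLoop_infty]⟩,
    ⟨⟨differenceSphere e ε f,
      (continuous_differenceSphere e ε).comp (continuous_const.prodMk continuous_id)⟩, by
      have h : halfCollapse (OnePoint.infty, OnePoint.infty) = OnePoint.infty := rfl
      have := differenceSphere_halfCollapse e ε f (OnePoint.infty, OnePoint.infty)
      rw [discDifference_eq_one e f h, h, ← hε, ε.symm_apply_apply] at this
      exact this⟩)

lemma continuous_toLoopProduct : Continuous (toLoopProduct δ hδ e ε hε) := by
  refine Continuous.prodMk (Continuous.subtype_mk ?_ _) (Continuous.subtype_mk ?_ _)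
  · exact ContinuousMap.continuous_of_continuous_uncurry _
      (continuous_fixedLoop.comp (continuous_fst.prodMk (δ.continuous.comp continuous_snd)))
  · exact ContinuousMap.continuous_of_continuous_uncurry _ (continuous_differenceSphere e ε)

/-- The equivariant map assembled from a loop in `S²` and an element of `Ω² S³`, in the
coordinates `planeCoords`. -/
def assemble (g : BasedSphereMaps 1 2 × BasedSphereMaps 2 3) (p : OnePoint ℝ × OnePoint ℝ) :
    RepSphere :=
  signSwap p.2 (e.symm (ε (g.2.1 (halfCollapse p)) *
    e (onePointSmash spaceCoords (g.1.1 (δ.symm p.1)) (projAbs p.2))))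

omit [IsTopologicalGroup G] in
include hε in
lemma assemble_aux (g : BasedSphereMaps 1 2 × BasedSphereMaps 2 3) {c t : OnePoint ℝ}
    (h : halfCollapse (c, t) = OnePoint.infty) :
    e.symm (ε (g.2.1 (halfCollapse (c, t))) *
      e (onePointSmash spaceCoords (g.1.1 (δ.symm c)) (projAbs t))) =
      onePointSmash spaceCoords (g.1.1 (δ.symm c)) (projAbs t) := by
  rw [h, g.2.2, hε, one_mul, e.symm_apply_apply]

omit [IsTopologicalGroup G] in
include hε in
lemma sphereSwap_assemble_aux (g : BasedSphereMaps 1 2 × BasedSphereMaps 2 3) {c t : OnePoint ℝ}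
    (h : t = OnePoint.infty ∨ t = ((0 : ℝ) : OnePoint ℝ)) :
    sphereSwap (e.symm (ε (g.2.1 (halfCollapse (c, t))) *
      e (onePointSmash spaceCoords (g.1.1 (δ.symm c)) (projAbs t)))) =
    e.symm (ε (g.2.1 (halfCollapse (c, t))) *
      e (onePointSmash spaceCoords (g.1.1 (δ.symm c)) (projAbs t))) := by
  rw [assemble_aux δ e ε hε g (halfCollapse_eq_infty_iff.2 (Or.inr h)), sphereSwap_smash]
  rcases h with rfl | rfl <;> simp

omit [IsTopologicalGroup G] in
include hδ hε in
lemma assemble_eq_infty (g : BasedSphereMaps 1 2 × BasedSphereMaps 2 3) {c t : OnePoint ℝ}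
    (h : c = OnePoint.infty ∨ t = OnePoint.infty) :
    assemble δ e ε g (c, t) = OnePoint.infty := by
  have hq : halfCollapse (c, t) = OnePoint.infty :=
    halfCollapse_eq_infty_iff.2 (h.imp_right Or.inl)
  have hz : onePointSmash spaceCoords (g.1.1 (δ.symm c)) (projAbs t) = OnePoint.infty := by
    rcases h with rfl | rfl
    · rw [← hδ, δ.symm_apply_apply, g.1.2, onePointSmash_infty_left]
    · simp
  rw [assemble, assemble_aux δ e ε hε g hq, hz, signSwap_of_fixed sphereSwap_infty]

omit [IsTopologicalGroup G] in
include hε in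
lemma assemble_zero (g : BasedSphereMaps 1 2 × BasedSphereMaps 2 3) (c : OnePoint ℝ) :
    assemble δ e ε g (c, ((0 : ℝ) : OnePoint ℝ)) = fixedIncl (g.1.1 (δ.symm c)) := by
  have hq : halfCollapse (c, ((0 : ℝ) : OnePoint ℝ)) = OnePoint.infty :=
    halfCollapse_eq_infty_iff.2 (Or.inr (Or.inr rfl))
  rw [assemble, assemble_aux δ e ε hε g hq]
  simp [signSwap, fixedIncl]

omit [IsTopologicalGroup G] in
include hε in
lemma assemble_projNeg (g : BasedSphereMaps 1 2 × BasedSphereMaps 2 3) (c t : OnePoint ℝ) :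
    assemble δ e ε g (c, projNeg t) = sphereSwap (assemble δ e ε g (c, t)) := by
  have hq : halfCollapse (c, projNeg t) = halfCollapse (c, t) := by simp [halfCollapse]
  simp only [assemble, hq, projAbs_projNeg]
  exact signSwap_projNeg (sphereSwap_assemble_aux δ e ε hε g)

omit [IsTopologicalGroup G] in
lemma assemble_projAbs (g : BasedSphereMaps 1 2 × BasedSphereMaps 2 3) (c t : OnePoint ℝ) :
    assemble δ e ε g (c, projAbs t) = e.symm (ε (g.2.1 (halfCollapse (c, t))) *
      e (onePointSmash spaceCoords (g.1.1 (δ.symm c)) (projAbs t))) := by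
  have hq : halfCollapse (c, projAbs t) = halfCollapse (c, t) := by simp [halfCollapse]
  simp [assemble, hq, signSwap]

include hε in
lemma continuous_assemble :
    Continuous fun w : (BasedSphereMaps 1 2 × BasedSphereMaps 2 3) × (OnePoint ℝ × OnePoint ℝ) =>
      assemble δ e ε w.1 w.2 := by
  have hJ := continuous_onePointSmash spaceCoords
  refine continuous_signSwap (by fun_prop) (e.symm.continuous.comp
    ((ε.continuous.comp ?_).mul (e.continuous.comp ?_)))
    fun w => sphereSwap_assemble_aux δ e ε hε w.1
  · exact (continuous_subtype_val.comp (continuous_snd.comp continuous_fst)).eval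
      (continuous_halfCollapse.comp continuous_snd)
  · refine hJ.comp (Continuous.prodMk ?_ (continuous_projAbs.comp (by fun_prop)))
    exact (continuous_subtype_val.comp (continuous_fst.comp continuous_fst)).eval
      (δ.symm.continuous.comp (by fun_prop))

/-- The descent of `assemble` to `S^ρ`. -/
def assembleSphere (g : BasedSphereMaps 1 2 × BasedSphereMaps 2 3)
    (x : OnePoint (EuclideanSpace ℝ (Fin 2))) : RepSphere :=
  assemble δ e ε g (Function.surjInv (onePointSmash_surjective planeCoords) x)

omit [IsTopologicalGroup G] in
include hδ hε in
lemma assembleSphere_smash (g : BasedSphereMaps 1 2 × BasedSphereMaps 2 3) (c t : OnePoint ℝ) :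
    assembleSphere δ e ε g (onePointSmash planeCoords c t) = assemble δ e ε g (c, t) := by
  have h := Function.surjInv_eq (onePointSmash_surjective planeCoords)
    (onePointSmash planeCoords c t)
  rw [assembleSphere]
  rcases (onePointSmash_eq_iff planeCoords).1 h with ⟨hc, ht⟩ | ⟨h₁, h₂⟩
  · exact congrArg _ (Prod.ext hc ht)
  · rw [assemble_eq_infty δ hδ e ε hε g h₂]
    exact assemble_eq_infty δ hδ e ε hε g h₁

include hδ hε in
lemma continuous_assembleSphere :
    Continuous fun p : (BasedSphereMaps 1 2 × BasedSphereMaps 2 3) ×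
      OnePoint (EuclideanSpace ℝ (Fin 2)) => assembleSphere δ e ε p.1 p.2 := by
  apply continuous_of_comp_surjective (continuous_onePointSmash planeCoords)
    (onePointSmash_surjective planeCoords)
  simp only [assembleSphere_smash δ hδ e ε hε]
  exact continuous_assemble δ e ε hε

/-- The equivariant map assembled from a loop in `S²` and an element of `Ω² S³`. -/
def ofLoopProduct (g : BasedSphereMaps 1 2 × BasedSphereMaps 2 3) : EquivariantSphereMaps :=
  ⟨⟨assembleSphere δ e ε g,
    (continuous_assembleSphere δ hδ e ε hε).comp (continuous_const.prodMk continuous_id)⟩,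
    (assembleSphere_smash δ hδ e ε hε g OnePoint.infty OnePoint.infty).trans
      (assemble_eq_infty δ hδ e ε hε g (Or.inl rfl)), by
    refine (equivariant_iff (assembleSphere δ e ε g)).2 fun c t => ?_
    simp only [assembleSphere_smash δ hδ e ε hε, assemble_projNeg δ e ε hε]⟩

@[simp] lemma ofLoopProduct_smash (g : BasedSphereMaps 1 2 × BasedSphereMaps 2 3)
    (c t : OnePoint ℝ) :
    (ofLoopProduct δ hδ e ε hε g).1 (onePointSmash planeCoords c t) =
      assemble δ e ε g (c, t) :=
  assembleSphere_smash δ hδ e ε hε g c t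

lemma continuous_ofLoopProduct : Continuous (ofLoopProduct δ hδ e ε hε) :=
  Continuous.subtype_mk (ContinuousMap.continuous_of_continuous_uncurry _
    (continuous_assembleSphere δ hδ e ε hε)) _

lemma ofLoopProduct_toLoopProduct (f : EquivariantSphereMaps) :
    ofLoopProduct δ hδ e ε hε (toLoopProduct δ hδ e ε hε f) = f := by
  ext x
  obtain ⟨⟨c, t⟩, rfl⟩ := onePointSmash_surjective planeCoords x
  simp only [ofLoopProduct_smash]
  rw [← signSwap_apply_projAbs]
  simp [assemble, toLoopProduct, differenceSphere_halfCollapse, discDifference]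

lemma fixedLoop_ofLoopProduct (g : BasedSphereMaps 1 2 × BasedSphereMaps 2 3) (c : OnePoint ℝ) :
    fixedLoop (ofLoopProduct δ hδ e ε hε g) c = g.1.1 (δ.symm c) := by
  apply fixedIncl_injective
  rw [fixedIncl_fixedLoop, ofLoopProduct_smash, assemble_zero δ e ε hε]

lemma toLoopProduct_ofLoopProduct (g : BasedSphereMaps 1 2 × BasedSphereMaps 2 3) :
    toLoopProduct δ hδ e ε hε (ofLoopProduct δ hδ e ε hε g) = g := by
  refine Prod.ext (Subtype.ext (ContinuousMap.ext fun c => ?_))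
    (Subtype.ext (ContinuousMap.ext fun w => ?_))
  · simp [toLoopProduct, fixedLoop_ofLoopProduct]
  · obtain ⟨⟨c, t⟩, rfl⟩ := halfCollapse_surjective w
    simp [toLoopProduct, differenceSphere_halfCollapse, discDifference, fixedLoop_ofLoopProduct,
      assemble_projAbs]

/-- A topological group structure on `S³` splits the equivariant mapping space as
`Ω S² × Ω² S³`. -/
def equivariantSphereMapsHomeomorph :
    EquivariantSphereMaps ≃ₜ BasedSphereMaps 1 2 × BasedSphereMaps 2 3 where
  toFun := toLoopProduct δ hδ e ε hε
  invFun := ofLoopProduct δ hδ e ε hε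
  left_inv := ofLoopProduct_toLoopProduct δ hδ e ε hε
  right_inv := toLoopProduct_ofLoopProduct δ hδ e ε hε
  continuous_toFun := continuous_toLoopProduct δ hδ e ε hε
  continuous_invFun := continuous_ofLoopProduct δ hδ e ε hε

end Group

lemma exists_onePoint_homeomorph_unitQuaternions {V : Type*} [NormedAddCommGroup V]
    [NormedSpace ℝ V] [FiniteDimensional ℝ V] (hV : Module.finrank ℝ V = 3) :
    ∃ e : OnePoint V ≃ₜ Metric.sphere (0 : Quaternion ℝ) 1, e OnePoint.infty = 1 := by
  obtain ⟨v, hv⟩ := exists_norm_eq (Quaternion ℝ) zero_le_one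
  have hv₀ : v ≠ 0 := fun h => by simp [h] at hv
  have : Fact (Module.finrank ℝ (Quaternion ℝ) = 3 + 1) :=
    ⟨Quaternion.finrank_eq_four⟩
  have hV' : Module.finrank ℝ V = Module.finrank ℝ (Submodule.span ℝ {v})ᗮ :=
    hV.trans (Submodule.finrank_orthogonal_span_singleton hv₀).symm
  let h := (ContinuousLinearEquiv.ofFinrankEq hV').toHomeomorph.onePointCongr.trans
    (onePointHyperplaneHomeoUnitSphere hv)
  exact ⟨h.trans (Homeomorph.mulLeft (h OnePoint.infty)⁻¹), by simp⟩

theorem equivariant_maps_regular_rep_C2_htpyEquiv :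
    Nonempty (ContinuousMap.HomotopyEquiv
      {f : C(OnePoint (EuclideanSpace ℝ (Fin 2)),
             OnePoint (EuclideanSpace ℝ (Fin 2) × ℝ)) //
        f OnePoint.infty = OnePoint.infty ∧
        ∀ (k : ZMod 2) (x : OnePoint (EuclideanSpace ℝ (Fin 2))),
          f (OnePoint.map (swapAct k) x) =
            OnePoint.map (fun p => (swapAct k p.1, p.2)) (f x)}
      (BasedSphereMaps 1 2 × BasedSphereMaps 2 3)) := by
  let δ : OnePoint (EuclideanSpace ℝ (Fin 1)) ≃ₜ OnePoint ℝ :=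
    (ContinuousLinearEquiv.ofFinrankEq (𝕜 := ℝ) (by simp)).toHomeomorph.onePointCongr
  obtain ⟨e, -⟩ := exists_onePoint_homeomorph_unitQuaternions
    (V := EuclideanSpace ℝ (Fin 2) × ℝ) (by simp)
  obtain ⟨ε, hε⟩ := exists_onePoint_homeomorph_unitQuaternions
    (V := EuclideanSpace ℝ (Fin 3)) (by simp)
  exact ⟨(equivariantSphereMapsHomeomorph δ rfl e ε hε).toHomotopyEquiv⟩

end
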